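/- Let X = { (i,j) : i, j ∈ ℕ, i < j } with the partial order (i,j) ≺ (i′,j′) iff j < j′ and either i = i′ or j < i′. Then every antichain in X is finite; moreover, if Y is an antichain and j₀ is the smallest second coordinate occurring among elements of Y, then Y has at most j₀ + 1 elements. -/

import Mathlib

/-- The set `X = { (i,j) : i,j ∈ ℕ, i < j }`. -/
def BergmanX : Type := { p : ℕ × ℕ // p.1 < p.2 }

/-- The relation `(i,j) ≺ (i',j')` iff `j < j'` and (`i = i'` or `j < i'`). -/
def BergmanPrec (x y : BergmanX) : Prop :=
  x.1.2 < y.1.2 ∧ (x.1.1 = y.1.1 ∨ x.1.2 < y.1.1)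

/-!
In an antichain distinct elements have distinct first coordinates, since elements sharing a first
coordinate form a chain. Moreover no first coordinate exceeds the second coordinate `j` of a given
member, since `j < i'` already gives `(i, j) ≺ (i', j')`. Hence the first coordinate embeds the
antichain into `{0, …, j}`.
-/

namespace BergmanPrec

variable {x y : BergmanX} {Y : Set BergmanX}

theorem of_snd_lt_fst (h : x.1.2 < y.1.1) : BergmanPrec x y :=
  ⟨h.trans y.2, Or.inr h⟩

theorem isChain_fst_eq (i : ℕ) : IsChain BergmanPrec {x : BergmanX | x.1.1 = i} := by
  intro x (hx : x.1.1 = i) y (hy : y.1.1 = i) hne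
  have hfst : x.1.1 = y.1.1 := hx.trans hy.symm
  have hsnd : x.1.2 ≠ y.1.2 := fun h => hne (Subtype.ext (Prod.ext hfst h))
  exact hsnd.lt_or_gt.imp (fun h => ⟨h, Or.inl hfst⟩) (fun h => ⟨h, Or.inl hfst.symm⟩)

theorem injOn_fst_of_isAntichain (hY : IsAntichain BergmanPrec Y) :
    Y.InjOn (fun x => x.1.1) := fun _ hx y hy hxy =>
  inter_subsingleton_of_isAntichain_of_isChain hY (isChain_fst_eq y.1.1) ⟨hx, hxy⟩ ⟨hy, rfl⟩

theorem fst_le_snd_of_isAntichain (hY : IsAntichain BergmanPrec Y) (hx : x ∈ Y) (hy : y ∈ Y) :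
    y.1.1 ≤ x.1.2 := by
  by_contra! h
  obtain rfl : x = y := hY.eq hx hy (of_snd_lt_fst h)
  exact h.not_gt x.2

theorem encard_le_of_isAntichain (hY : IsAntichain BergmanPrec Y) (hx : x ∈ Y) :
    Y.encard ≤ (x.1.2 + 1 : ℕ) :=
  calc
    Y.encard ≤ {i | i < x.1.2 + 1}.encard :=
      Set.encard_le_encard_of_injOn
        (fun _ hy => Nat.lt_succ_of_le (fst_le_snd_of_isAntichain hY hx hy))
        (injOn_fst_of_isAntichain hY)
    _ = (x.1.2 + 1 : ℕ) := Set.Nat.encard_range _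

end BergmanPrec

/-- **All antichains in `X` are finite.**  Every antichain `Y` of `(X, ≺)` is
finite; moreover, if `j₀` is the smallest second coordinate occurring among the
elements of `Y`, then `Y` has at most `j₀ + 1` elements. -/
theorem bergmanX_antichains_finite (Y : Set BergmanX)
    (hY : IsAntichain BergmanPrec Y) :
    Y.Finite ∧ ∀ j₀ : ℕ, (∃ x ∈ Y, x.1.2 = j₀) → (∀ y ∈ Y, j₀ ≤ y.1.2) →
      Y.ncard ≤ j₀ + 1 := by
  refine ⟨?_, ?_⟩
  · obtain rfl | ⟨x, hx⟩ := Y.eq_empty_or_nonempty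
    · exact Set.finite_empty
    · exact Set.finite_of_encard_le_coe (BergmanPrec.encard_le_of_isAntichain hY hx)
  · rintro _ ⟨x, hx, rfl⟩ _
    exact (Set.encard_le_coe_iff_finite_ncard_le.1
      (BergmanPrec.encard_le_of_isAntichain hY hx)).2
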